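/- Let η ∈ ℤ≥0, let r : ℂ → ℂ be analytic at 0, set q(t) := −η/t + r(t), and let ω₀ ∈ ℂ× satisfy ω₀·q(ω₀ t) = q(t) for all t in some punctured neighbourhood of 0. Let f be meromorphic at 0 with a pole at 0, satisfying the Riccati equation f'(t) + f(t)² + f(t)·q(t) = 0 on a punctured neighbourhood of 0. Then the equivariance relation ω₀·f(ω₀ t) = f(t) holds automatically for all t in some punctured neighbourhood of 0, with no condition on ω₀ or η. -/

import Mathlib

open Filter Topology

/-- The singular coefficient function `q(t) = −η/t + r(t)` of the Riccati equation. -/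
noncomputable def riccatiQ (η : ℕ) (r : ℂ → ℂ) (t : ℂ) : ℂ := -(η : ℂ) / t + r t

/-!
The reciprocal `g = 1 / f` of a solution satisfies the affine equation `g' = 1 + q g`, so the
difference `d` of the reciprocals of two solutions with a pole at `x` satisfies `d' = q d` and tends
to `0`. If `d` had finite order `n`, then `n > 0` and `(t - x) q(t) = (t - x) d'(t) / d(t)` would
tend to `n`. Hence, unless `q` has a positive integer as its residue, there is at most one solution
with a pole. Equivariance of `q` makes `ω₀ f(ω₀ t)` another such solution, so it equals `f`; for
`q = -η/t + r` the residue is `-η ≤ 0`.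
-/

section NormedField

variable {𝕜 : Type*} [NontriviallyNormedField 𝕜]

/-- `f` is a singular solution at `x` of the Riccati equation `f' + f² + f q = 0`: a meromorphic
function with a pole at `x` that satisfies the equation on a punctured neighbourhood of `x`. The
pole is encoded by `f t → ∞` as `t → x`. -/
structure IsSingularRiccatiSolution (q : 𝕜 → 𝕜) (x : 𝕜) (f : 𝕜 → 𝕜) : Prop where
  meromorphicAt : MeromorphicAt f x
  tendsto_cobounded : Tendsto f (𝓝[≠] x) (Bornology.cobounded 𝕜)
  eventually_riccati : ∀ᶠ t in 𝓝[≠] x, deriv f t + f t ^ 2 + f t * q t = 0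

theorem tendsto_const_mul_nhdsNE {ω : 𝕜} (hω : ω ≠ 0) (x : 𝕜) :
    Tendsto (ω * ·) (𝓝[≠] x) (𝓝[≠] (ω * x)) :=
  ((Homeomorph.mulLeft₀ ω hω).map_punctured_nhds_eq x).le

theorem hasDerivAt_inv_of_riccati {q f : 𝕜 → 𝕜} {t : 𝕜} (hf : DifferentiableAt 𝕜 f t)
    (hft : f t ≠ 0) (hric : deriv f t + f t ^ 2 + f t * q t = 0) :
    HasDerivAt f⁻¹ (1 + q t * f⁻¹ t) t := by
  have hrhs : 1 + q t * f⁻¹ t = -deriv f t / f t ^ 2 := by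
    rw [Pi.inv_apply]
    field_simp
    linear_combination hric
  exact hrhs ▸ hf.hasDerivAt.inv hft

theorem tendsto_sub_mul_logDeriv [CompleteSpace 𝕜] {f : 𝕜 → 𝕜} {x : 𝕜} {n : ℤ}
    (hf : MeromorphicAt f x) (hn : meromorphicOrderAt f x = n) :
    Tendsto (fun t ↦ (t - x) * logDeriv f t) (𝓝[≠] x) (𝓝 n) := by
  obtain ⟨g, hg, hgx, hfg⟩ := (meromorphicOrderAt_eq_int_iff hf).1 hn
  have hlim : Tendsto (fun t ↦ n + (t - x) * logDeriv g t) (𝓝[≠] x) (𝓝 n) := by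
    have hcont : ContinuousAt (fun t ↦ n + (t - x) * logDeriv g t) x :=
      continuousAt_const.add <| (continuousAt_id.sub continuousAt_const).mul
        (hg.deriv.continuousAt.div hg.continuousAt hgx)
    simpa using hcont.tendsto.mono_left nhdsWithin_le_nhds
  refine hlim.congr' ?_
  filter_upwards [logDeriv_congr_nhdsNE hfg, self_mem_nhdsWithin,
    hg.eventually_analyticAt.filter_mono nhdsWithin_le_nhds,
    (hg.continuousAt.eventually_ne hgx).filter_mono nhdsWithin_le_nhds] with t hlog htx hgt hgt0
  have hsub : t - x ≠ 0 := sub_ne_zero.2 htx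
  have hlog_zpow : logDeriv (fun s ↦ (s - x) ^ n) t = n / (t - x) := by
    rw [logDeriv_fun_zpow (by fun_prop)]
    simp [logDeriv_apply, div_eq_mul_inv]
  simp only [smul_eq_mul] at hlog
  rw [hlog, logDeriv_mul (f := fun s ↦ (s - x) ^ n) t (zpow_ne_zero n hsub) hgt0
    (.zpow (by fun_prop) (.inl hsub)) hgt.differentiableAt, hlog_zpow]
  field_simp

theorem eventually_eq_zero_of_deriv_eq_mul [CompleteSpace 𝕜] {q d : 𝕜 → 𝕜} {x : 𝕜}
    (hq : ∀ n : ℤ, 0 < n → ¬ Tendsto (fun t ↦ (t - x) * q t) (𝓝[≠] x) (𝓝 n))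
    (hd : MeromorphicAt d x) (hd0 : Tendsto d (𝓝[≠] x) (𝓝 0))
    (hode : ∀ᶠ t in 𝓝[≠] x, deriv d t = q t * d t) :
    ∀ᶠ t in 𝓝[≠] x, d t = 0 := by
  rw [← meromorphicOrderAt_eq_top_iff]
  by_contra htop
  obtain ⟨n, hn⟩ := WithTop.ne_top_iff_exists.1 htop
  have hn_pos : 0 < n := by
    have := (tendsto_zero_iff_meromorphicOrderAt_pos hd).1 hd0
    rw [← hn] at this
    exact_mod_cast this
  refine hq n hn_pos <| (tendsto_sub_mul_logDeriv hd hn.symm).congr' ?_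
  filter_upwards [hode, (meromorphicOrderAt_ne_top_iff_eventually_ne_zero hd).1 htop]
    with t hdt hdt0
  rw [logDeriv_apply, hdt, mul_div_cancel_right₀ _ hdt0]

namespace IsSingularRiccatiSolution

variable {p q f f₁ f₂ : 𝕜 → 𝕜} {x ω : 𝕜}

theorem congr_coeff (hf : IsSingularRiccatiSolution q x f) (hpq : q =ᶠ[𝓝[≠] x] p) :
    IsSingularRiccatiSolution p x f where
  meromorphicAt := hf.meromorphicAt
  tendsto_cobounded := hf.tendsto_cobounded
  eventually_riccati := by
    filter_upwards [hf.eventually_riccati, hpq] with t hric hpqt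
    rwa [← hpqt]

theorem rescale (hf : IsSingularRiccatiSolution q (ω * x) f) (hω : ω ≠ 0) :
    IsSingularRiccatiSolution (fun t ↦ ω * q (ω * t)) x (fun t ↦ ω * f (ω * t)) where
  meromorphicAt :=
    (MeromorphicAt.const ω x).mul <|
      hf.meromorphicAt.comp_analyticAt (g := (ω * ·)) (by fun_prop)
  tendsto_cobounded :=
    (tendsto_mul_left_cobounded hω).comp <|
      hf.tendsto_cobounded.comp (tendsto_const_mul_nhdsNE hω x)
  eventually_riccati := by
    filter_upwards [(tendsto_const_mul_nhdsNE hω x).eventually hf.eventually_riccati] with t hric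
    rw [deriv_const_mul_field, deriv_comp_mul_left, smul_eq_mul]
    linear_combination ω ^ 2 * hric

theorem eventually_ne_zero (hf : IsSingularRiccatiSolution q x f) : ∀ᶠ t in 𝓝[≠] x, f t ≠ 0 :=
  hf.tendsto_cobounded.eventually_ne_cobounded 0

theorem tendsto_inv (hf : IsSingularRiccatiSolution q x f) : Tendsto f⁻¹ (𝓝[≠] x) (𝓝 0) :=
  tendsto_inv₀_cobounded.comp hf.tendsto_cobounded

theorem eventually_hasDerivAt_inv [CompleteSpace 𝕜] (hf : IsSingularRiccatiSolution q x f) :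
    ∀ᶠ t in 𝓝[≠] x, HasDerivAt f⁻¹ (1 + q t * f⁻¹ t) t := by
  filter_upwards [hf.meromorphicAt.eventually_analyticAt, hf.eventually_ne_zero,
    hf.eventually_riccati] with t hft hft0 hric
  exact hasDerivAt_inv_of_riccati hft.differentiableAt hft0 hric

theorem eventuallyEq [CompleteSpace 𝕜]
    (hq : ∀ n : ℤ, 0 < n → ¬ Tendsto (fun t ↦ (t - x) * q t) (𝓝[≠] x) (𝓝 n))
    (hf₁ : IsSingularRiccatiSolution q x f₁) (hf₂ : IsSingularRiccatiSolution q x f₂) :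
    f₁ =ᶠ[𝓝[≠] x] f₂ := by
  have hode : ∀ᶠ t in 𝓝[≠] x, deriv (f₁⁻¹ - f₂⁻¹) t = q t * (f₁⁻¹ - f₂⁻¹) t := by
    filter_upwards [hf₁.eventually_hasDerivAt_inv, hf₂.eventually_hasDerivAt_inv] with t h₁ h₂
    rw [(h₁.sub h₂).deriv, Pi.sub_apply]
    ring
  have hlim : Tendsto (f₁⁻¹ - f₂⁻¹) (𝓝[≠] x) (𝓝 0) :=
    sub_zero (0 : 𝕜) ▸ hf₁.tendsto_inv.sub hf₂.tendsto_inv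
  filter_upwards [eventually_eq_zero_of_deriv_eq_mul hq
    (hf₁.meromorphicAt.inv.sub hf₂.meromorphicAt.inv) hlim hode] with t ht
  exact inv_injective (sub_eq_zero.1 ht)

end IsSingularRiccatiSolution

theorem stmt_7_general [CompleteSpace 𝕜] {q f : 𝕜 → 𝕜} {ω₀ : 𝕜} (hω₀ : ω₀ ≠ 0)
    (hres : ∀ n : ℤ, 0 < n → ¬ Tendsto (fun t ↦ t * q t) (𝓝[≠] 0) (𝓝 n))
    (hq : ∀ᶠ t in 𝓝[≠] (0 : 𝕜), ω₀ * q (ω₀ * t) = q t)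
    (hf : IsSingularRiccatiSolution q 0 f) :
    ∀ᶠ t in 𝓝[≠] (0 : 𝕜), ω₀ * f (ω₀ * t) = f t := by
  have hf_rescaled : IsSingularRiccatiSolution q 0 (fun t ↦ ω₀ * f (ω₀ * t)) :=
    (IsSingularRiccatiSolution.rescale (by rwa [mul_zero]) hω₀).congr_coeff hq
  exact hf_rescaled.eventuallyEq (by simpa only [sub_zero] using hres) hf

end NormedField

theorem tendsto_mul_riccatiQ (η : ℕ) {r : ℂ → ℂ} (hr : ContinuousAt r 0) :
    Tendsto (fun t ↦ t * riccatiQ η r t) (𝓝[≠] 0) (𝓝 (-η)) := by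
  have hlim : Tendsto (fun t ↦ -(η : ℂ) + t * r t) (𝓝[≠] 0) (𝓝 (-η)) := by
    have hcont : ContinuousAt (fun t ↦ -(η : ℂ) + t * r t) 0 := by fun_prop
    simpa using hcont.tendsto.mono_left nhdsWithin_le_nhds
  refine hlim.congr' ?_
  filter_upwards [self_mem_nhdsWithin] with t (ht : t ≠ 0)
  rw [riccatiQ, mul_add, mul_div_cancel₀ _ ht]

theorem not_tendsto_mul_riccatiQ_of_pos (η : ℕ) {r : ℂ → ℂ} (hr : ContinuousAt r 0) {n : ℤ}
    (hn : 0 < n) : ¬ Tendsto (fun t ↦ t * riccatiQ η r t) (𝓝[≠] 0) (𝓝 n) := fun hlim ↦ by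
  have hη : -(η : ℤ) = n := by
    exact_mod_cast tendsto_nhds_unique (tendsto_mul_riccatiQ η hr) hlim
  lia

/-- for a singular (pole at 0) meromorphic solution `f` of the Riccati
equation with `ω₀`-equivariant coefficient `q`, the equivariance
`ω₀·f(ω₀t) = f(t)` holds automatically. -/
theorem stmt_7 (η : ℕ) (r f : ℂ → ℂ) (ω₀ : ℂ) (hω₀ : ω₀ ≠ 0)
    (hr : AnalyticAt ℂ r 0)
    (hq : ∀ᶠ t in 𝓝[≠] (0 : ℂ), ω₀ * riccatiQ η r (ω₀ * t) = riccatiQ η r t)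
    (hf : MeromorphicAt f 0)
    (hpole : Tendsto (fun t => ‖f t‖) (𝓝[≠] (0 : ℂ)) atTop)
    (hRic : ∀ᶠ t in 𝓝[≠] (0 : ℂ),
      deriv f t + f t ^ 2 + f t * riccatiQ η r t = 0) :
    ∀ᶠ t in 𝓝[≠] (0 : ℂ), ω₀ * f (ω₀ * t) = f t :=
  stmt_7_general hω₀ (fun _ hn ↦ not_tendsto_mul_riccatiQ_of_pos η hr.continuousAt hn) hq
    ⟨hf, tendsto_norm_atTop_iff_cobounded.1 hpole, hRic⟩
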